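/- Let h : 𝕋 → 𝕋 be a bi-Lipschitz orientation-preserving circle homeomorphism with irrational rotation number and unique invariant measure μ. Suppose that μ-almost everywhere, the upper and lower Dini derivatives of h agree ((h)'_+ = (h)'_− μ-a.e., i.e. h is C¹-regular μ-a.e.). Then (1/n) log((hⁿ)'_+(θ)) → 0 and (1/n) log((hⁿ)'_−(θ)) → 0 as n → ∞, uniformly in θ ∈ 𝕋. -/

import Mathlib

open Filter MeasureTheory

/-- Upper Dini-type derivative: `limsup` of difference quotients over pairs of
distinct points converging to `x`. -/
noncomputable def diniSup (H : ℝ → ℝ) (x : ℝ) : ℝ :=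
  Filter.limsup (fun p : ℝ × ℝ => (H p.1 - H p.2) / (p.1 - p.2))
    ((nhds (x, x)) ⊓ Filter.principal {p : ℝ × ℝ | p.1 ≠ p.2})

/-- Lower Dini-type derivative: the corresponding `liminf`. -/
noncomputable def diniInf (H : ℝ → ℝ) (x : ℝ) : ℝ :=
  Filter.liminf (fun p : ℝ × ℝ => (H p.1 - H p.2) / (p.1 - p.2))
    ((nhds (x, x)) ⊓ Filter.principal {p : ℝ × ℝ | p.1 ≠ p.2})

open Function Set Topology
open scoped ENNReal NNReal BoundedContinuousFunction

/-!
Write `h` for the circle map with lift `H`. By the chain rule, `log (hⁿ)'₊` is at most the `n`-th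
Birkhoff sum of the bounded, upper semicontinuous function `log h'₊`, and dually `log (hⁿ)'₋` is at
least the Birkhoff sum of the lower semicontinuous `log h'₋`. Over a uniquely ergodic map, the
Birkhoff averages of an upper semicontinuous function are eventually below any `c` exceeding its
integral, uniformly in the base point, because the function has a continuous majorant with integral
less than `c`; here this replaces Furman's uniform subadditive theorem. Since `h'₊ = h'₋` almost
everywhere, `λ = ∫ log h'₊ dμ = ∫ log h'₋ dμ` is therefore the uniform limit of both exponents, and
`λ = 0` because a degree one map can neither contract nor expand everywhere.

Unique ergodicity of `h` comes from Poincaré's semiconjugacy `F` to the rotation by `ρ`: it maps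
every invariant measure `ν` to Lebesgue measure, and this forces `ν [b, 1) = F 1 - F b`.
-/

section UniqueErgodicity

variable {X : Type*} [MeasurableSpace X]

/-- Unique ergodicity of `T`: every `T`-invariant probability measure equals the invariant measure
`μ`. That `μ` is itself a probability measure is not part of the structure. -/
structure UniquelyErgodic (T : X → X) (μ : Measure X) : Prop extends MeasurePreserving T μ μ where
  eq_of_measurePreserving : ∀ ν : Measure X,
    IsProbabilityMeasure ν → MeasurePreserving T ν ν → ν = μ

/-- The empirical measure of the orbit segment `x, T x, …, T^[n - 1] x`; it is the zero measure
for `n = 0` and a probability measure otherwise. -/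
noncomputable def empiricalMeasure (T : X → X) (n : ℕ) (x : X) : Measure X :=
  (n : ℝ≥0∞)⁻¹ • ∑ k ∈ Finset.range n, Measure.dirac (T^[k] x)

lemma isProbabilityMeasure_empiricalMeasure (T : X → X) {n : ℕ} (hn : n ≠ 0) (x : X) :
    IsProbabilityMeasure (empiricalMeasure T n x) := by
  constructor
  simp [empiricalMeasure, ENNReal.inv_mul_cancel (Nat.cast_ne_zero.2 hn)]

lemma integral_empiricalMeasure [TopologicalSpace X] [OpensMeasurableSpace X] (T : X → X) (n : ℕ)
    (x : X) (f : X →ᵇ ℝ) : ∫ y, f y ∂empiricalMeasure T n x = birkhoffAverage ℝ T f n x := by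
  rw [empiricalMeasure, integral_smul_measure,
    integral_finsetSum_measure fun k _ ↦ f.integrable (Measure.dirac (T^[k] x))]
  simp [birkhoffAverage, birkhoffSum, integral_dirac' _ _ f.continuous.stronglyMeasurable]

variable [TopologicalSpace X] [BorelSpace X]

lemma measurePreserving_of_tendsto_birkhoffAverage [HasOuterApproxClosed X] {ι : Type*}
    {l : Filter ι} [l.NeBot] {T : X → X} (hT : Continuous T) {n : ι → ℕ}
    (hn : Tendsto n l atTop) {x : ι → X} {ν : Measure X} [IsFiniteMeasure ν]
    (hν : ∀ f : X →ᵇ ℝ,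
      Tendsto (fun i ↦ birkhoffAverage ℝ T f (n i) (x i)) l (𝓝 (∫ y, f y ∂ν))) :
    MeasurePreserving T ν ν := by
  refine ⟨hT.measurable, ext_of_forall_integral_eq_of_IsFiniteMeasure fun f ↦ ?_⟩
  have hdist : Tendsto (fun i ↦ birkhoffAverage ℝ T f (n i) (T (x i)) -
      birkhoffAverage ℝ T f (n i) (x i)) l (𝓝 0) := by
    refine squeeze_zero_norm (a := fun i ↦ 2 * ‖f‖ / n i) (fun i ↦ ?_)
      (tendsto_const_nhds.div_atTop (tendsto_natCast_atTop_atTop.comp hn))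
    rw [← dist_eq_norm, dist_birkhoffAverage_apply_birkhoffAverage]
    gcongr
    exact f.dist_le_two_norm _ _
  have hcomp : Tendsto (fun i ↦ birkhoffAverage ℝ T f (n i) (T (x i))) l (𝓝 (∫ y, f (T y) ∂ν)) := by
    refine (hν (f.compContinuous ⟨T, hT⟩)).congr fun i ↦ ?_
    simp [birkhoffAverage, birkhoffSum, ← iterate_succ_apply, iterate_succ_apply']
  rw [integral_map hT.aemeasurable f.continuous.aestronglyMeasurable]
  exact tendsto_nhds_unique hcomp (by simpa using hdist.add (hν f))

variable [CompactSpace X] [T2Space X] {μ : Measure X}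

lemma exists_isProbabilityMeasure_tendsto_birkhoffAverage {ι : Type*} (U : Ultrafilter ι)
    (T : X → X) (n : ι → ℕ) (hn : ∀ i, n i ≠ 0) (x : ι → X) :
    ∃ ν : Measure X, IsProbabilityMeasure ν ∧ ∀ f : X →ᵇ ℝ,
      Tendsto (fun i ↦ birkhoffAverage ℝ T f (n i) (x i)) U (𝓝 (∫ y, f y ∂ν)) := by
  let P : ι → ProbabilityMeasure X := fun i ↦
    ⟨empiricalMeasure T (n i) (x i), isProbabilityMeasure_empiricalMeasure T (hn i) (x i)⟩
  obtain ⟨ν, -, hν⟩ := isCompact_univ.ultrafilter_le_nhds (U.map P) (by simp)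
  refine ⟨ν, inferInstance, fun f ↦ ?_⟩
  have hlim : Tendsto P U (𝓝 ν) := hν
  simpa only [P, ProbabilityMeasure.coe_mk, integral_empiricalMeasure] using
    ProbabilityMeasure.tendsto_iff_forall_integral_tendsto.1 hlim f

lemma exists_continuous_gt_integral_lt [IsFiniteMeasure μ] [μ.WeaklyRegular] {f : X → ℝ}
    (hf : UpperSemicontinuous f) (hfi : Integrable f μ) {c : ℝ} (hc : ∫ x, f x ∂μ < c) :
    ∃ g : C(X, ℝ), (∀ x, f x < g x) ∧ ∫ x, g x ∂μ < c := by
  -- `u` is a Vitali–Carathéodory majorant; a partition of unity fits `g` between `f` and `u`.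
  obtain ⟨u, hfu, hu, hui, hutop, hint⟩ :=
    exists_lt_lowerSemicontinuous_integral_lt f hfi (sub_pos.2 hc)
  have hlocal : ∀ x, ∃ q : ℝ, ∀ᶠ y in 𝓝 x, q ∈ Ioi (f y) ∩ {q : ℝ | (q : EReal) < u y} := by
    intro x
    obtain ⟨q, hfq, hqu⟩ := EReal.lt_iff_exists_real_btwn.1 (hfu x)
    exact ⟨q, (hf x q (by exact_mod_cast hfq)).and (hu x q hqu)⟩
  have hconvex (x : X) : Convex ℝ (Ioi (f x) ∩ {q : ℝ | (q : EReal) < u x}) :=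
    (convex_Ioi _).inter <| OrdConnected.convex
      ⟨fun _ _ _ hb _ hq ↦ (EReal.coe_le_coe_iff.2 hq.2).trans_lt hb⟩
  obtain ⟨g, hg⟩ := exists_continuous_forall_mem_convex_of_local_const hconvex hlocal
  refine ⟨g, fun x ↦ (hg x).1, lt_of_le_of_lt ?_ (hint.trans_eq (by ring))⟩
  refine integral_mono_ae ((BoundedContinuousFunction.mkOfCompact g).integrable μ) hui ?_
  filter_upwards [hutop] with x hx
  exact EReal.coe_le_coe_iff.1 ((hg x).2.le.trans (EReal.le_coe_toReal hx.ne))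

variable [HasOuterApproxClosed X] {T : X → X}

theorem UniquelyErgodic.eventually_birkhoffAverage_lt_of_continuous (hμ : UniquelyErgodic T μ)
    (hT : Continuous T) (g : C(X, ℝ)) {c : ℝ} (hc : ∫ x, g x ∂μ < c) :
    ∀ᶠ n in atTop, ∀ x, birkhoffAverage ℝ T g n x < c := by
  -- Krylov–Bogolyubov: were this false, empirical measures along the bad times would accumulate at
  -- an invariant measure giving `g` integral at least `c`.
  by_contra h
  obtain ⟨n, hnmono, hn⟩ := extraction_of_frequently_atTop
    ((not_eventually.1 h).and_eventually (eventually_ne_atTop 0))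
  simp only [not_forall, not_lt] at hn
  choose hx hn using hn
  choose x hx using hx
  obtain ⟨ν, hνprob, hν⟩ :=
    exists_isProbabilityMeasure_tendsto_birkhoffAverage (hyperfilter ℕ) T n hn x
  have hinv : MeasurePreserving T ν ν := measurePreserving_of_tendsto_birkhoffAverage hT
    (hnmono.tendsto_atTop.mono_left Nat.hyperfilter_le_atTop) hν
  refine hc.not_ge (hμ.eq_of_measurePreserving ν hνprob hinv ▸ ?_)
  exact ge_of_tendsto' (hν (BoundedContinuousFunction.mkOfCompact g)) hx

theorem UniquelyErgodic.eventually_birkhoffAverage_lt (hμ : UniquelyErgodic T μ)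
    (hT : Continuous T) [IsFiniteMeasure μ] [μ.WeaklyRegular] {f : X → ℝ}
    (hf : UpperSemicontinuous f) (hfi : Integrable f μ) {c : ℝ} (hc : ∫ x, f x ∂μ < c) :
    ∀ᶠ n in atTop, ∀ x, birkhoffAverage ℝ T f n x < c := by
  obtain ⟨g, hfg, hgc⟩ := exists_continuous_gt_integral_lt hf hfi hc
  filter_upwards [hμ.eventually_birkhoffAverage_lt_of_continuous hT g hgc] with n hn x
  refine lt_of_le_of_lt ?_ (hn x)
  simp only [birkhoffAverage, birkhoffSum, smul_eq_mul]
  gcongr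
  exact (hfg _).le

end UniqueErgodicity

section TranslationInvariance

variable {G : Type*} [AddGroup G] [MeasurableSpace G] {ν : Measure G}

lemma measurePreserving_zsmul_add_left [MeasurableAdd G] {a : G}
    (h : MeasurePreserving (a + ·) ν ν) : ∀ n : ℤ, MeasurePreserving (n • a + ·) ν ν := by
  have hneg : MeasurePreserving (-a + ·) ν ν := h.symm (MeasurableEquiv.addLeft a)
  intro n
  obtain ⟨n, rfl | rfl⟩ := n.eq_nat_or_neg
  · simpa [add_left_iterate] using h.iterate n
  · simpa [add_left_iterate] using hneg.iterate n

variable [TopologicalSpace G] [ContinuousAdd G] [BorelSpace G] [FirstCountableTopology G]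
  [HasOuterApproxClosed G]

lemma isClosed_setOf_map_add_left_eq (ν : Measure G) [IsFiniteMeasure ν] :
    IsClosed {a : G | ν.map (a + ·) = ν} := by
  have hset : {a : G | ν.map (a + ·) = ν} =
      ⋂ f : G →ᵇ ℝ, {a | ∫ x, f (a + x) ∂ν = ∫ x, f x ∂ν} := by
    ext a
    have hmap (f : G →ᵇ ℝ) : ∫ x, f x ∂ν.map (a + ·) = ∫ x, f (a + x) ∂ν :=
      integral_map (by fun_prop) f.continuous.aestronglyMeasurable
    simp only [mem_ofPred_eq, mem_iInter, ← hmap]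
    exact ⟨fun h f ↦ by rw [h], ext_of_forall_integral_eq_of_IsFiniteMeasure⟩
  rw [hset]
  refine isClosed_iInter fun f ↦ isClosed_eq ?_ continuous_const
  refine continuous_of_dominated (bound := fun _ ↦ ‖f‖) (fun a ↦ ?_) (fun a ↦ ?_)
    (integrable_const _) (ae_of_all _ fun x ↦ by fun_prop)
  · exact (show Continuous fun x ↦ f (a + x) by fun_prop).aestronglyMeasurable
  · exact ae_of_all _ fun x ↦ f.norm_coe_le_norm _

lemma isAddLeftInvariant_of_denseRange_zsmul [IsFiniteMeasure ν] {a : G}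
    (ha : DenseRange (· • a : ℤ → G)) (h : MeasurePreserving (a + ·) ν ν) :
    ν.IsAddLeftInvariant :=
  ⟨fun b ↦ (isClosed_setOf_map_add_left_eq ν).closure_subset_iff.2
    (range_subset_iff.2 fun n ↦ (measurePreserving_zsmul_add_left h n).map_eq) (ha b)⟩

end TranslationInvariance

lemma eq_volume_of_measurePreserving_irrational_add {a : ℝ} (ha : Irrational a)
    {ν : Measure UnitAddCircle} [IsProbabilityMeasure ν]
    (h : MeasurePreserving ((a : UnitAddCircle) + ·) ν ν) : ν = volume := by
  have hdense : DenseRange (· • (a : UnitAddCircle) : ℤ → UnitAddCircle) :=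
    AddCircle.denseRange_zsmul_coe_iff.2 (by simpa using ha)
  have := isAddLeftInvariant_of_denseRange_zsmul hdense h
  have : ν.IsAddHaarMeasure := Measure.isAddHaarMeasure_of_isCompact_nonempty_interior ν univ
    isCompact_univ (by simp) (by simp) (by simp)
  have : IsProbabilityMeasure (volume : Measure UnitAddCircle) := ⟨by simp⟩
  exact Measure.isAddHaarMeasure_eq_of_isProbabilityMeasure ν volume

lemma volume_image_coe_Icc_le (c d : ℝ) :
    volume ((↑) '' Icc c d : Set UnitAddCircle) ≤ ENNReal.ofReal (d - c) := by
  calc volume ((↑) '' Icc c d : Set UnitAddCircle)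
      ≤ volume (Metric.closedBall (((c + d) / 2 : ℝ) : UnitAddCircle) ((d - c) / 2)) := by
        gcongr
        rintro _ ⟨x, hx, rfl⟩
        rw [Metric.mem_closedBall, dist_eq_norm, ← AddCircle.coe_sub]
        refine QuotientAddGroup.norm_mk_le_norm.trans ?_
        rw [Real.norm_eq_abs, abs_le]
        constructor <;> linarith [hx.1, hx.2]
    _ ≤ ENNReal.ofReal (d - c) := by
        rw [AddCircle.volume_closedBall]
        exact ENNReal.ofReal_le_ofReal ((min_le_right _ _).trans_eq (by ring))

section CircleMaps

/-- The degree one map of the circle `ℝ / ℤ` with lift `f`. -/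
noncomputable def inducedCircleMap (f : CircleDeg1Lift) : UnitAddCircle → UnitAddCircle :=
  Periodic.lift (f := fun x ↦ (f x : UnitAddCircle)) (c := 1) fun x ↦ by simp

@[simp]
lemma inducedCircleMap_coe (f : CircleDeg1Lift) (x : ℝ) :
    inducedCircleMap f (x : UnitAddCircle) = (f x : UnitAddCircle) := rfl

lemma continuous_inducedCircleMap {f : CircleDeg1Lift} (hf : Continuous f) :
    Continuous (inducedCircleMap f) :=
  continuous_coinduced_dom.2 (show Continuous fun x ↦ (f x : UnitAddCircle) from
    (AddCircle.continuous_mk' 1).comp hf)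

/-- The representative of a point of the circle `ℝ / ℤ` in the fundamental domain `[0, 1)`. -/
noncomputable def circleRep (t : UnitAddCircle) : ℝ := AddCircle.equivIco 1 0 t

lemma measurable_circleRep : Measurable circleRep :=
  measurable_subtype_coe.comp (AddCircle.measurableEquivIco 1 0).measurable

@[simp]
lemma coe_circleRep (t : UnitAddCircle) : (circleRep t : UnitAddCircle) = t :=
  (AddCircle.equivIco 1 0).symm_apply_apply t

lemma circleRep_mem_Ico (t : UnitAddCircle) : circleRep t ∈ Ico (0 : ℝ) 1 := by
  simpa only [circleRep, zero_add] using (AddCircle.equivIco 1 0 t).2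

lemma measurable_inducedCircleMap (f : CircleDeg1Lift) : Measurable (inducedCircleMap f) := by
  have h : inducedCircleMap f = fun t ↦ (f (circleRep t) : UnitAddCircle) := by
    ext t; rw [← inducedCircleMap_coe, coe_circleRep]
  rw [h]
  exact AddCircle.measurable_mk'.comp (f.monotone.measurable.comp measurable_circleRep)

lemma semiconj_inducedCircleMap {F f g : CircleDeg1Lift} (h : Semiconj F f g) :
    Semiconj (inducedCircleMap F) (inducedCircleMap f) (inducedCircleMap g) := by
  intro t
  induction t using QuotientAddGroup.induction_on with
  | H x => simp only [inducedCircleMap_coe, h x]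

lemma inducedCircleMap_translate (a : ℝ) :
    inducedCircleMap (CircleDeg1Lift.translate (Multiplicative.ofAdd a)) =
      ((a : UnitAddCircle) + ·) := by
  ext t
  induction t using QuotientAddGroup.induction_on with
  | H x => simp

lemma measure_circleRep_mem_Icc_le {F : CircleDeg1Lift} {ν : Measure UnitAddCircle}
    (hν : MeasurePreserving (inducedCircleMap F) ν) (a b : ℝ) :
    ν {t | circleRep t ∈ Icc a b} ≤ ENNReal.ofReal (F b - F a) := by
  have hK : MeasurableSet ((↑) '' Icc (F a) (F b) : Set UnitAddCircle) :=
    (isCompact_Icc.image (AddCircle.continuous_mk' 1)).measurableSet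
  calc ν {t | circleRep t ∈ Icc a b}
      ≤ ν (inducedCircleMap F ⁻¹' ((↑) '' Icc (F a) (F b))) := by
        refine measure_mono fun t ht ↦ ⟨F (circleRep t), ⟨F.monotone ht.1, F.monotone ht.2⟩, ?_⟩
        rw [← inducedCircleMap_coe, coe_circleRep]
    _ = volume ((↑) '' Icc (F a) (F b) : Set UnitAddCircle) :=
        hν.measure_preimage hK.nullMeasurableSet
    _ ≤ ENNReal.ofReal (F b - F a) := volume_image_coe_Icc_le _ _

lemma measure_circleRep_mem_Icc_one {F : CircleDeg1Lift} {ν : Measure UnitAddCircle}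
    (hν : MeasurePreserving (inducedCircleMap F) ν) {b : ℝ} (hb : b ∈ Icc (0 : ℝ) 1) :
    ν {t | circleRep t ∈ Icc b 1} = ENNReal.ofReal (F 1 - F b) := by
  -- The bounds for `[0, b]` and `[b, 1]` add up to `F 1 - F 0 = 1 = ν univ`: both are equalities.
  refine (measure_circleRep_mem_Icc_le hν b 1).antisymm ?_
  have hone : 1 ≤ ENNReal.ofReal (F b - F 0) + ν {t | circleRep t ∈ Icc b 1} :=
    calc 1 = ν univ := by
          simpa using (hν.measure_preimage MeasurableSet.univ.nullMeasurableSet).symm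
      _ ≤ ν ({t | circleRep t ∈ Icc 0 b} ∪ {t | circleRep t ∈ Icc b 1}) := by
        refine measure_mono fun t _ ↦ ?_
        have ht := circleRep_mem_Ico t
        exact (le_total (circleRep t) b).imp (⟨ht.1, ·⟩) (⟨·, ht.2.le⟩)
      _ ≤ ν {t | circleRep t ∈ Icc 0 b} + ν {t | circleRep t ∈ Icc b 1} := measure_union_le _ _
      _ ≤ _ := by gcongr; exact measure_circleRep_mem_Icc_le hν 0 b
  calc ENNReal.ofReal (F 1 - F b) = ENNReal.ofReal (1 - (F b - F 0)) := by
        congr 1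
        have := F.map_add_one 0
        rw [zero_add] at this
        rw [this]; ring
    _ = 1 - ENNReal.ofReal (F b - F 0) := by
        rw [ENNReal.ofReal_sub _ (sub_nonneg.2 (F.monotone hb.1)), ENNReal.ofReal_one]
    _ ≤ _ := tsub_le_iff_left.2 hone

lemma measure_ext_circleRep {ν₁ ν₂ : Measure UnitAddCircle} [IsFiniteMeasure ν₁]
    (h : ∀ b ∈ Icc (0 : ℝ) 1, ν₁ {t | circleRep t ∈ Icc b 1} = ν₂ {t | circleRep t ∈ Icc b 1}) :
    ν₁ = ν₂ := by
  have hmap : ν₁.map circleRep = ν₂.map circleRep := by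
    refine Measure.ext_of_Ici _ _ fun b ↦ ?_
    rw [Measure.map_apply measurable_circleRep measurableSet_Ici,
      Measure.map_apply measurable_circleRep measurableSet_Ici]
    rcases lt_or_ge 1 b with hb | hb
    · have : circleRep ⁻¹' Ici b = ∅ :=
        eq_empty_of_forall_notMem fun t ht ↦ (circleRep_mem_Ico t).2.not_ge (hb.le.trans ht)
      simp [this]
    · have : circleRep ⁻¹' Ici b = {t | circleRep t ∈ Icc (max b 0) 1} := by
        ext t
        simp [(circleRep_mem_Ico t).1, (circleRep_mem_Ico t).2.le]
      rw [this, h _ ⟨le_max_right _ _, max_le hb zero_le_one⟩]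
  have hid (ν : Measure UnitAddCircle) : (ν.map circleRep).map (↑) = ν := by
    rw [Measure.map_map AddCircle.measurable_mk' measurable_circleRep]
    simp [comp_def]
  rw [← hid ν₁, hmap, hid]

lemma exists_measurePreserving_inducedCircleMap_volume {f : CircleDeg1Lift} (hf : Bijective f)
    (hirr : Irrational f.translationNumber) : ∃ F : CircleDeg1Lift, ∀ ν : Measure UnitAddCircle,
      IsProbabilityMeasure ν → MeasurePreserving (inducedCircleMap f) ν ν →
        MeasurePreserving (inducedCircleMap F) ν := by
  set R := CircleDeg1Lift.translate (Multiplicative.ofAdd f.translationNumber)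
  obtain ⟨F, hF⟩ := CircleDeg1Lift.semiconj_of_bijective_of_translationNumber_eq hf
    (CircleDeg1Lift.isUnit_iff_bijective.1 R.isUnit)
    (CircleDeg1Lift.translationNumber_translate _).symm
  refine ⟨F, fun ν hν hfν ↦ ⟨measurable_inducedCircleMap F, ?_⟩⟩
  have := Measure.isProbabilityMeasure_map (μ := ν) (measurable_inducedCircleMap F).aemeasurable
  refine eq_volume_of_measurePreserving_irrational_add hirr ?_
  rw [← inducedCircleMap_translate]
  exact ((measurable_inducedCircleMap F).measurePreserving ν).of_semiconj hfν
    (semiconj_inducedCircleMap hF) (measurable_inducedCircleMap R)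

theorem uniquelyErgodic_inducedCircleMap {f : CircleDeg1Lift} (hf : Bijective f)
    (hirr : Irrational f.translationNumber) {μ : Measure UnitAddCircle} [IsProbabilityMeasure μ]
    (hμ : MeasurePreserving (inducedCircleMap f) μ μ) :
    UniquelyErgodic (inducedCircleMap f) μ := by
  obtain ⟨F, hF⟩ := exists_measurePreserving_inducedCircleMap_volume hf hirr
  refine ⟨hμ, fun ν hν hfν ↦ ?_⟩
  exact measure_ext_circleRep fun b hb ↦ by
    rw [measure_circleRep_mem_Icc_one (hF ν hν hfν) hb,
      measure_circleRep_mem_Icc_one (hF μ inferInstance hμ) hb]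

end CircleMaps

section PeriodicObservables

variable {f : CircleDeg1Lift} {μ : Measure ℝ}

lemma measurePreserving_inducedCircleMap (hf : MeasurePreserving (fun t ↦ Int.fract (f t)) μ μ) :
    MeasurePreserving (inducedCircleMap f) (μ.map (↑)) (μ.map (↑)) :=
  (AddCircle.measurable_mk'.measurePreserving μ).of_semiconj hf (fun t ↦ by simp)
    (measurable_inducedCircleMap f)

lemma upperSemicontinuous_periodic_lift {φ : ℝ → ℝ} {p : ℝ} (hper : Periodic φ p)
    (hφ : UpperSemicontinuous φ) : UpperSemicontinuous (hper.lift : AddCircle p → ℝ) :=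
  upperSemicontinuous_iff_isOpen_preimage.2 fun c ↦
    isQuotientMap_quotient_mk'.isOpen_preimage.1 (hφ.isOpen_preimage c)

lemma birkhoffAverage_inducedCircleMap {φ : ℝ → ℝ} (hper : Periodic φ 1) (n : ℕ) (x : ℝ) :
    birkhoffAverage ℝ (inducedCircleMap f) hper.lift n x = birkhoffAverage ℝ f φ n x := by
  have hsemi : Semiconj ((↑) : ℝ → UnitAddCircle) f (inducedCircleMap f) := fun _ ↦ rfl
  have hiter (k : ℕ) : (inducedCircleMap f)^[k] x = ((f^[k] x : ℝ) : UnitAddCircle) :=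
    (hsemi.iterate_right k x).symm
  simp only [birkhoffAverage, birkhoffSum, hiter, Periodic.lift_coe]

variable [IsProbabilityMeasure μ]

theorem eventually_birkhoffAverage_lt_of_periodic (hf : Bijective f)
    (hirr : Irrational f.translationNumber)
    (hμ : MeasurePreserving (fun t ↦ Int.fract (f t)) μ μ) {φ : ℝ → ℝ} (hper : Periodic φ 1)
    (hφ : UpperSemicontinuous φ) (hint : Integrable φ μ) {c : ℝ} (hc : ∫ x, φ x ∂μ < c) :
    ∀ᶠ n in atTop, ∀ x, birkhoffAverage ℝ f φ n x < c := by
  have hcoe : Measurable ((↑) : ℝ → UnitAddCircle) := AddCircle.measurable_mk'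
  have := Measure.isProbabilityMeasure_map (μ := μ) hcoe.aemeasurable
  have husc := upperSemicontinuous_periodic_lift hper hφ
  have hsm : AEStronglyMeasurable hper.lift (μ.map ((↑) : ℝ → UnitAddCircle)) :=
    husc.measurable.aestronglyMeasurable
  have hue := uniquelyErgodic_inducedCircleMap hf hirr (measurePreserving_inducedCircleMap hμ)
  have hcont := continuous_inducedCircleMap (f.continuous_iff_surjective.2 hf.surjective)
  have hlt := hue.eventually_birkhoffAverage_lt hcont husc
    ((integrable_map_measure hsm hcoe.aemeasurable).2 hint) (c := c)
    (by rw [integral_map hcoe.aemeasurable hsm]; exact hc)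
  filter_upwards [hlt] with n hn x
  simpa only [birkhoffAverage_inducedCircleMap] using hn x

end PeriodicObservables

section Dini

/-- The punctured neighbourhood filter of the diagonal point `(x, x)`: the pairs of distinct points
along which the Dini derivatives at `x` are taken. -/
def offDiagNhds (x : ℝ) : Filter (ℝ × ℝ) := 𝓝[{p | p.1 ≠ p.2}] (x, x)

/-- The difference quotient of `G` at the pair `p`, with the junk value `0` on the diagonal. -/
noncomputable def diffQuot (G : ℝ → ℝ) (p : ℝ × ℝ) : ℝ := (G p.1 - G p.2) / (p.1 - p.2)

variable {G : ℝ → ℝ} {K : ℝ≥0}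

lemma diniSup_def (G : ℝ → ℝ) (x : ℝ) : diniSup G x = limsup (diffQuot G) (offDiagNhds x) := rfl

lemma diniInf_def (G : ℝ → ℝ) (x : ℝ) : diniInf G x = liminf (diffQuot G) (offDiagNhds x) := rfl

lemma tendsto_prodMk_nhdsGT_offDiagNhds (x : ℝ) :
    Tendsto (fun z ↦ (z, x)) (𝓝[>] x) (offDiagNhds x) :=
  tendsto_nhdsWithin_iff.2
    ⟨((continuous_id.prodMk continuous_const).tendsto x).mono_left inf_le_left,
      eventually_mem_nhdsWithin.mono fun _ hz ↦ ne_of_gt hz⟩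

instance (x : ℝ) : (offDiagNhds x).NeBot := (tendsto_prodMk_nhdsGT_offDiagNhds x).neBot

lemma eventually_fst_ne_snd (x : ℝ) : ∀ᶠ p in offDiagNhds x, p.1 ≠ p.2 :=
  eventually_mem_nhdsWithin

lemma abs_diffQuot_le (hG : LipschitzWith K G) (p : ℝ × ℝ) : |diffQuot G p| ≤ K := by
  rw [diffQuot, abs_div]
  exact div_le_of_le_mul₀ (abs_nonneg _) K.2 (by simpa [Real.dist_eq] using hG.dist_le_mul p.1 p.2)

lemma isBoundedUnder_le_diffQuot (hG : LipschitzWith K G) (l : Filter (ℝ × ℝ)) :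
    l.IsBoundedUnder (· ≤ ·) (diffQuot G) :=
  isBoundedUnder_of ⟨K, fun p ↦ (abs_le.1 (abs_diffQuot_le hG p)).2⟩

lemma isBoundedUnder_ge_diffQuot (hG : LipschitzWith K G) (l : Filter (ℝ × ℝ)) :
    l.IsBoundedUnder (· ≥ ·) (diffQuot G) :=
  isBoundedUnder_of ⟨-K, fun p ↦ (abs_le.1 (abs_diffQuot_le hG p)).1⟩

lemma diniInf_le_diniSup (hG : LipschitzWith K G) (x : ℝ) : diniInf G x ≤ diniSup G x :=
  liminf_le_limsup (f := offDiagNhds x) (isBoundedUnder_le_diffQuot hG _)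
    (isBoundedUnder_ge_diffQuot hG _)

lemma diniSup_le (hG : LipschitzWith K G) (x : ℝ) : diniSup G x ≤ K :=
  limsup_le_of_le (isBoundedUnder_ge_diffQuot hG (offDiagNhds x)).isCoboundedUnder_le
    (.of_forall fun p ↦ (abs_le.1 (abs_diffQuot_le hG p)).2)

lemma diniInf_eq_neg_diniSup_neg (G : ℝ → ℝ) (x : ℝ) : diniInf G x = -diniSup (-G) x := by
  have hquot : diffQuot (-G) = -diffQuot G := by
    ext p
    simp only [diffQuot, Pi.neg_apply]
    ring
  rw [diniInf_def, diniSup_def, hquot, liminf_eq, limsup_eq, ← Real.sSup_neg]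
  congr 1
  ext a
  simp [neg_le_neg_iff]

lemma upperSemicontinuous_diniSup (hG : LipschitzWith K G) : UpperSemicontinuous (diniSup G) := by
  intro x c hc
  obtain ⟨b, hb, hbc⟩ := exists_between hc
  have hev : ∀ᶠ p in 𝓝 (x, x), p ∈ {p : ℝ × ℝ | p.1 ≠ p.2} → diffQuot G p < b :=
    eventually_nhdsWithin_iff.1 (eventually_lt_of_limsup_lt hb (isBoundedUnder_le_diffQuot hG _))
  have hdiag : Tendsto (fun y : ℝ ↦ (y, y)) (𝓝 x) (𝓝 (x, x)) :=
    (continuous_id.prodMk continuous_id).tendsto x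
  filter_upwards [hdiag.eventually hev.eventually_nhds] with y hy
  refine lt_of_le_of_lt ?_ hbc
  exact limsup_le_of_le (isBoundedUnder_ge_diffQuot hG (offDiagNhds y)).isCoboundedUnder_le
    ((eventually_nhdsWithin_iff.2 hy).mono fun _ ↦ le_of_lt)

lemma lowerSemicontinuous_diniInf (hG : LipschitzWith K G) : LowerSemicontinuous (diniInf G) := by
  rw [show diniInf G = Neg.neg ∘ diniSup (-G) from funext (diniInf_eq_neg_diniSup_neg G)]
  exact continuous_neg.comp_upperSemicontinuous_antitone (upperSemicontinuous_diniSup hG.neg)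
    fun _ _ ↦ neg_le_neg

lemma sub_le_of_diniSup_le (hG : LipschitzWith K G) {c a b : ℝ} (hab : a ≤ b)
    (hc : ∀ x ∈ Ico a b, diniSup G x ≤ c) : G b - G a ≤ c * (b - a) := by
  have hslope : ∀ x ∈ Ico a b, ∀ r, c < r → ∃ᶠ z in 𝓝[>] x, slope G x z < r := by
    intro x hx r hr
    have := (tendsto_prodMk_nhdsGT_offDiagNhds x).eventually
      (eventually_lt_of_limsup_lt ((hc x hx).trans_lt hr) (isBoundedUnder_le_diffQuot hG _))
    simpa only [slope_def_field] using this.frequently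
  have := image_le_of_liminf_slope_right_le_deriv_boundary hG.continuous.continuousOn
    (B := fun x ↦ G a + c * (x - a)) (by simp) (by fun_prop)
    (fun x _ ↦ (((hasDerivAt_id x).sub_const a).const_mul c |>.const_add (G a)).hasDerivWithinAt)
    (by simpa using hslope) (right_mem_Icc.2 hab)
  linarith

lemma le_sub_of_le_diniInf (hG : LipschitzWith K G) {c a b : ℝ} (hab : a ≤ b)
    (hc : ∀ x ∈ Ico a b, c ≤ diniInf G x) : c * (b - a) ≤ G b - G a := by
  have := sub_le_of_diniSup_le hG.neg (c := -c) hab fun x hx ↦ by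
    linarith [hc x hx, diniInf_eq_neg_diniSup_neg G x]
  simp only [Pi.neg_apply] at this
  linarith

lemma map_add_one_offDiagNhds (x : ℝ) :
    map (fun p : ℝ × ℝ ↦ p + (1, 1)) (offDiagNhds x) = offDiagNhds (x + 1) := by
  have := (Homeomorph.addRight ((1, 1) : ℝ × ℝ)).isEmbedding.map_nhdsWithin_eq
    {p | p.1 ≠ p.2} (x, x)
  simpa [offDiagNhds, image_add_right] using! this

lemma diffQuot_add_one (hG : ∀ t, G (t + 1) = G t + 1) (p : ℝ × ℝ) :
    diffQuot G (p + (1, 1)) = diffQuot G p := by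
  simp [diffQuot, hG]

lemma periodic_diniSup (hG : ∀ t, G (t + 1) = G t + 1) : Periodic (diniSup G) 1 := fun x ↦ by
  rw [diniSup_def, ← map_add_one_offDiagNhds, ← limsup_comp]
  simp only [comp_def, diffQuot_add_one hG, ← diniSup_def]

lemma periodic_diniInf (hG : ∀ t, G (t + 1) = G t + 1) : Periodic (diniInf G) 1 := fun x ↦ by
  rw [diniInf_def, ← map_add_one_offDiagNhds, ← liminf_comp]
  simp only [comp_def, diffQuot_add_one hG, ← diniInf_def]

lemma tendsto_prodMap_offDiagNhds (hG : Continuous G) (hinj : Injective G) (x : ℝ) :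
    Tendsto (Prod.map G G) (offDiagNhds x) (offDiagNhds (G x)) :=
  tendsto_nhdsWithin_iff.2 ⟨((hG.prodMap hG).tendsto (x, x)).mono_left inf_le_left,
    (eventually_fst_ne_snd x).mono fun _ hp ↦ hinj.ne hp⟩

lemma diffQuot_comp (F : ℝ → ℝ) (hinj : Injective G) :
    diffQuot (F ∘ G) = (diffQuot F ∘ Prod.map G G) * diffQuot G := by
  ext p
  rcases eq_or_ne p.1 p.2 with hp | hp
  · simp [diffQuot, hp]
  · exact (div_mul_div_cancel₀ (sub_ne_zero.2 (hinj.ne hp))).symm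

lemma diffQuot_nonneg (hG : Monotone G) (p : ℝ × ℝ) : 0 ≤ diffQuot G p := by
  rcases le_total p.1 p.2 with h | h
  · exact div_nonneg_of_nonpos (sub_nonpos.2 (hG h)) (sub_nonpos.2 h)
  · exact div_nonneg (sub_nonneg.2 (hG h)) (sub_nonneg.2 h)

lemma diniInf_nonneg (hGmono : Monotone G) (hG : LipschitzWith K G) (x : ℝ) : 0 ≤ diniInf G x :=
  le_liminf_of_le (isBoundedUnder_le_diffQuot hG (offDiagNhds x)).isCoboundedUnder_ge
    (.of_forall (diffQuot_nonneg hGmono))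

lemma diniSup_comp_le {F : ℝ → ℝ} {L : ℝ≥0} (hFmono : Monotone F) (hF : LipschitzWith L F)
    (hGmono : StrictMono G) (hG : LipschitzWith K G) (x : ℝ) :
    diniSup (F ∘ G) x ≤ diniSup F (G x) * diniSup G x := by
  have hlim := tendsto_prodMap_offDiagNhds hG.continuous hGmono.injective x
  have hFle : limsup (diffQuot F ∘ Prod.map G G) (offDiagNhds x) ≤ diniSup F (G x) :=
    hlim.limsup_comp_le_limsup
      (isBoundedUnder_ge_diffQuot hF (map (Prod.map G G) (offDiagNhds x))).isCoboundedUnder_le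
      (isBoundedUnder_le_diffQuot hF _)
  rw [diniSup_def, diffQuot_comp F hGmono.injective]
  refine (limsup_mul_le ?_ ?_ ?_ ?_).trans (mul_le_mul_of_nonneg_right hFle
    ((diniInf_nonneg hGmono.monotone hG x).trans (diniInf_le_diniSup hG x)))
  · exact .of_forall fun p ↦ diffQuot_nonneg hFmono _
  · exact isBoundedUnder_le_diffQuot hF (map (Prod.map G G) (offDiagNhds x))
  · exact .of_forall fun p ↦ diffQuot_nonneg hGmono.monotone p
  · exact isBoundedUnder_le_diffQuot hG _

lemma le_diniInf_comp {F : ℝ → ℝ} {L : ℝ≥0} (hFmono : Monotone F) (hF : LipschitzWith L F)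
    (hGmono : StrictMono G) (hG : LipschitzWith K G) (x : ℝ) :
    diniInf F (G x) * diniInf G x ≤ diniInf (F ∘ G) x := by
  have hlim := tendsto_prodMap_offDiagNhds hG.continuous hGmono.injective x
  have hleF : diniInf F (G x) ≤ liminf (diffQuot F ∘ Prod.map G G) (offDiagNhds x) :=
    hlim.liminf_le_liminf_comp
      (isBoundedUnder_le_diffQuot hF (map (Prod.map G G) (offDiagNhds x))).isCoboundedUnder_ge
      (isBoundedUnder_ge_diffQuot hF _)
  rw [diniInf_def (F ∘ G), diffQuot_comp F hGmono.injective]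
  refine (mul_le_mul_of_nonneg_right hleF (diniInf_nonneg hGmono.monotone hG x)).trans
    (le_liminf_mul ?_ ?_ ?_ ?_)
  · exact .of_forall fun p ↦ diffQuot_nonneg hFmono _
  · exact isBoundedUnder_le_diffQuot hF (map (Prod.map G G) (offDiagNhds x))
  · exact .of_forall fun p ↦ diffQuot_nonneg hGmono.monotone p
  · exact (isBoundedUnder_le_diffQuot hG (offDiagNhds x)).isCoboundedUnder_ge

end Dini

section MonoBiLipschitz

lemma antilipschitzWith_iterate {X : Type*} [PseudoEMetricSpace X] {K : ℝ≥0} {f : X → X}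
    (hf : AntilipschitzWith K f) (n : ℕ) : AntilipschitzWith (K ^ n) f^[n] := by
  induction n with
  | zero => exact AntilipschitzWith.id
  | succ n ih => rw [pow_succ', iterate_succ]; exact ih.comp hf

/-- Orientation-preserving bi-Lipschitz maps of the line, with a common constant for the map and
its inverse. -/
structure MonoBiLipschitzWith (K : ℝ≥0) (G : ℝ → ℝ) : Prop where
  monotone : Monotone G
  lipschitzWith : LipschitzWith K G
  antilipschitzWith : AntilipschitzWith K G

namespace MonoBiLipschitzWith

variable {K : ℝ≥0} {G : ℝ → ℝ}

protected lemma strictMono (hG : MonoBiLipschitzWith K G) : StrictMono G :=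
  hG.monotone.strictMono_of_injective hG.antilipschitzWith.injective

protected lemma iterate (hG : MonoBiLipschitzWith K G) (n : ℕ) :
    MonoBiLipschitzWith (K ^ n) G^[n] :=
  ⟨hG.monotone.iterate n, hG.lipschitzWith.iterate n,
    antilipschitzWith_iterate hG.antilipschitzWith n⟩

lemma pos (hG : MonoBiLipschitzWith K G) : (0 : ℝ) < K := by
  have h := hG.antilipschitzWith.le_mul_dist 1 0
  rw [Real.dist_0_eq_abs, abs_one] at h
  exact pos_of_mul_pos_left (one_pos.trans_le h) dist_nonneg

lemma inv_le_diffQuot (hG : MonoBiLipschitzWith K G) {p : ℝ × ℝ} (hp : p.1 ≠ p.2) :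
    (K : ℝ)⁻¹ ≤ diffQuot G p := by
  rw [← abs_of_nonneg (diffQuot_nonneg hG.monotone p), diffQuot, abs_div,
    le_div_iff₀ (abs_pos.2 (sub_ne_zero.2 hp)), inv_mul_le_iff₀ hG.pos]
  exact hG.antilipschitzWith.le_mul_dist p.1 p.2

lemma inv_le_diniInf (hG : MonoBiLipschitzWith K G) (x : ℝ) : (K : ℝ)⁻¹ ≤ diniInf G x :=
  le_liminf_of_le (isBoundedUnder_le_diffQuot hG.lipschitzWith (offDiagNhds x)).isCoboundedUnder_ge
    ((eventually_fst_ne_snd x).mono fun _ ↦ hG.inv_le_diffQuot)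

lemma diniInf_pos (hG : MonoBiLipschitzWith K G) (x : ℝ) : 0 < diniInf G x :=
  (inv_pos.2 hG.pos).trans_le (hG.inv_le_diniInf x)

lemma diniSup_pos (hG : MonoBiLipschitzWith K G) (x : ℝ) : 0 < diniSup G x :=
  (hG.diniInf_pos x).trans_le (diniInf_le_diniSup hG.lipschitzWith x)

lemma log_diniInf_le_log_diniSup (hG : MonoBiLipschitzWith K G) (x : ℝ) :
    Real.log (diniInf G x) ≤ Real.log (diniSup G x) :=
  Real.log_le_log (hG.diniInf_pos x) (diniInf_le_diniSup hG.lipschitzWith x)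

lemma log_diniSup_le (hG : MonoBiLipschitzWith K G) (x : ℝ) :
    Real.log (diniSup G x) ≤ Real.log K :=
  Real.log_le_log (hG.diniSup_pos x) (diniSup_le hG.lipschitzWith x)

lemma neg_log_le_log_diniInf (hG : MonoBiLipschitzWith K G) (x : ℝ) :
    -Real.log K ≤ Real.log (diniInf G x) := by
  rw [← Real.log_inv]
  exact Real.log_le_log (inv_pos.2 hG.pos) (hG.inv_le_diniInf x)

lemma upperSemicontinuous_log_diniSup (hG : MonoBiLipschitzWith K G) :
    UpperSemicontinuous fun x ↦ Real.log (diniSup G x) := by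
  intro x c hc
  have hexp := upperSemicontinuous_diniSup hG.lipschitzWith x _
    ((Real.log_lt_iff_lt_exp (hG.diniSup_pos x)).1 hc)
  exact hexp.mono fun y ↦ (Real.log_lt_iff_lt_exp (hG.diniSup_pos y)).2

lemma lowerSemicontinuous_log_diniInf (hG : MonoBiLipschitzWith K G) :
    LowerSemicontinuous fun x ↦ Real.log (diniInf G x) := by
  intro x c hc
  have hexp := lowerSemicontinuous_diniInf hG.lipschitzWith x _
    ((Real.lt_log_iff_exp_lt (hG.diniInf_pos x)).1 hc)
  exact hexp.mono fun y ↦ (Real.lt_log_iff_exp_lt (hG.diniInf_pos y)).2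

lemma log_diniSup_iterate_le (hG : MonoBiLipschitzWith K G) (n : ℕ) (x : ℝ) :
    Real.log (diniSup G^[n] x) ≤ birkhoffSum G (fun y ↦ Real.log (diniSup G y)) n x := by
  induction n generalizing x with
  | zero => simpa using (hG.iterate 0).log_diniSup_le x
  | succ n ih =>
    have hGn := hG.iterate n
    calc Real.log (diniSup G^[n + 1] x)
        ≤ Real.log (diniSup G^[n] (G x) * diniSup G x) :=
          Real.log_le_log ((hG.iterate (n + 1)).diniSup_pos x)
            (diniSup_comp_le hGn.monotone hGn.lipschitzWith hG.strictMono hG.lipschitzWith x)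
      _ = Real.log (diniSup G x) + Real.log (diniSup G^[n] (G x)) := by
          rw [Real.log_mul (hGn.diniSup_pos _).ne' (hG.diniSup_pos x).ne', add_comm]
      _ ≤ _ := by
          rw [birkhoffSum_succ']
          gcongr
          exact ih (G x)

lemma le_log_diniInf_iterate (hG : MonoBiLipschitzWith K G) (n : ℕ) (x : ℝ) :
    birkhoffSum G (fun y ↦ Real.log (diniInf G y)) n x ≤ Real.log (diniInf G^[n] x) := by
  induction n generalizing x with
  | zero => simpa using (hG.iterate 0).neg_log_le_log_diniInf x
  | succ n ih =>
    have hGn := hG.iterate n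
    calc birkhoffSum G (fun y ↦ Real.log (diniInf G y)) (n + 1) x
        ≤ Real.log (diniInf G x) + Real.log (diniInf G^[n] (G x)) := by
          rw [birkhoffSum_succ']
          gcongr
          exact ih (G x)
      _ = Real.log (diniInf G^[n] (G x) * diniInf G x) := by
          rw [Real.log_mul (hGn.diniInf_pos _).ne' (hG.diniInf_pos x).ne', add_comm]
      _ ≤ Real.log (diniInf G^[n + 1] x) :=
          Real.log_le_log (mul_pos (hGn.diniInf_pos _) (hG.diniInf_pos x))
            (le_diniInf_comp hGn.monotone hGn.lipschitzWith hG.strictMono hG.lipschitzWith x)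

end MonoBiLipschitzWith

end MonoBiLipschitz

section GrowthRate

lemma tendstoUniformly_zero_of_eventually {ι α : Type*} {l : Filter ι} {u v : ι → α → ℝ}
    (hvu : ∀ i x, v i x ≤ u i x) (hu : ∀ c, 0 < c → ∀ᶠ i in l, ∀ x, u i x < c)
    (hv : ∀ c, c < 0 → ∀ᶠ i in l, ∀ x, c < v i x) :
    TendstoUniformly u (fun _ ↦ 0) l ∧ TendstoUniformly v (fun _ ↦ 0) l := by
  simp only [Metric.tendstoUniformly_iff, dist_zero_left, Real.norm_eq_abs, abs_lt]
  refine ⟨fun ε hε ↦ ?_, fun ε hε ↦ ?_⟩ <;>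
    filter_upwards [hu ε hε, hv (-ε) (neg_lt_zero.2 hε)] with i hui hvi x
  · exact ⟨(hvi x).trans_le (hvu i x), hui x⟩
  · exact ⟨hvi x, (hvu i x).trans_lt (hui x)⟩

namespace MonoBiLipschitzWith

variable {K : ℝ≥0} {G : ℝ → ℝ} {f : CircleDeg1Lift} {μ : Measure ℝ} {c : ℝ}

lemma integrable_log_diniSup [IsFiniteMeasure μ] (hG : MonoBiLipschitzWith K G) :
    Integrable (fun x ↦ Real.log (diniSup G x)) μ :=
  .of_bound hG.upperSemicontinuous_log_diniSup.measurable.aestronglyMeasurable (Real.log K) <|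
    ae_of_all μ fun x ↦ abs_le.2
      ⟨(hG.neg_log_le_log_diniInf x).trans (hG.log_diniInf_le_log_diniSup x), hG.log_diniSup_le x⟩

lemma integrable_log_diniInf [IsFiniteMeasure μ] (hG : MonoBiLipschitzWith K G) :
    Integrable (fun x ↦ Real.log (diniInf G x)) μ :=
  .of_bound hG.lowerSemicontinuous_log_diniInf.measurable.aestronglyMeasurable (Real.log K) <|
    ae_of_all μ fun x ↦ abs_le.2
      ⟨hG.neg_log_le_log_diniInf x, (hG.log_diniInf_le_log_diniSup x).trans (hG.log_diniSup_le x)⟩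

lemma nonneg_of_log_diniSup_le (hG : MonoBiLipschitzWith K G) (hdeg : ∀ t, G (t + 1) = G t + 1)
    (hc : ∀ x, Real.log (diniSup G x) ≤ c) : 0 ≤ c := by
  have h := sub_le_of_diniSup_le hG.lipschitzWith (lt_add_one (0 : ℝ)).le
    fun x _ ↦ (Real.log_le_iff_le_exp (hG.diniSup_pos x)).1 (hc x)
  rw [hdeg, add_sub_cancel_left, add_sub_cancel_left, mul_one] at h
  exact Real.one_le_exp_iff.1 h

lemma nonpos_of_le_log_diniInf (hG : MonoBiLipschitzWith K G) (hdeg : ∀ t, G (t + 1) = G t + 1)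
    (hc : ∀ x, c ≤ Real.log (diniInf G x)) : c ≤ 0 := by
  have h := le_sub_of_le_diniInf hG.lipschitzWith (lt_add_one (0 : ℝ)).le
    fun x _ ↦ (Real.le_log_iff_exp_le (hG.diniInf_pos x)).1 (hc x)
  rw [hdeg, add_sub_cancel_left, add_sub_cancel_left, mul_one] at h
  exact Real.exp_le_one_iff.1 h

lemma bijective (hf : MonoBiLipschitzWith K f) : Bijective f :=
  ⟨hf.strictMono.injective, f.continuous_iff_surjective.1 hf.lipschitzWith.continuous⟩

variable [IsProbabilityMeasure μ]

theorem eventually_log_diniSup_iterate_lt (hf : MonoBiLipschitzWith K f)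
    (hirr : Irrational f.translationNumber)
    (hμ : MeasurePreserving (fun t ↦ Int.fract (f t)) μ μ)
    (hc : ∫ x, Real.log (diniSup f x) ∂μ < c) :
    ∀ᶠ n : ℕ in atTop, ∀ x, 1 / (n : ℝ) * Real.log (diniSup f^[n] x) < c := by
  have hper := (periodic_diniSup f.map_add_one).comp Real.log
  filter_upwards [eventually_birkhoffAverage_lt_of_periodic hf.bijective hirr hμ hper
    hf.upperSemicontinuous_log_diniSup hf.integrable_log_diniSup hc] with n hn x
  refine lt_of_le_of_lt ?_ (hn x)
  rw [one_div, birkhoffAverage, smul_eq_mul]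
  gcongr
  exact hf.log_diniSup_iterate_le n x

theorem eventually_lt_log_diniInf_iterate (hf : MonoBiLipschitzWith K f)
    (hirr : Irrational f.translationNumber)
    (hμ : MeasurePreserving (fun t ↦ Int.fract (f t)) μ μ)
    (hc : c < ∫ x, Real.log (diniInf f x) ∂μ) :
    ∀ᶠ n : ℕ in atTop, ∀ x, c < 1 / (n : ℝ) * Real.log (diniInf f^[n] x) := by
  have hper := (periodic_diniInf f.map_add_one).comp fun y ↦ -Real.log y
  have husc : UpperSemicontinuous fun x ↦ -Real.log (diniInf f x) :=
    continuous_neg.comp_lowerSemicontinuous_antitone hf.lowerSemicontinuous_log_diniInf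
      fun _ _ ↦ neg_le_neg
  filter_upwards [eventually_birkhoffAverage_lt_of_periodic hf.bijective hirr hμ hper
    husc hf.integrable_log_diniInf.neg (c := -c)
    ((integral_neg _).trans_lt (neg_lt_neg hc))] with n hn x
  have hlt : c < birkhoffAverage ℝ f (fun y ↦ Real.log (diniInf f y)) n x := by
    rw [← neg_lt_neg_iff, ← Pi.neg_apply, ← Pi.neg_apply, ← birkhoffAverage_neg]
    exact hn x
  refine hlt.trans_le ?_
  rw [one_div, birkhoffAverage, smul_eq_mul]
  gcongr
  exact hf.le_log_diniInf_iterate n x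

lemma integral_log_diniSup_nonneg (hf : MonoBiLipschitzWith K f)
    (hirr : Irrational f.translationNumber)
    (hμ : MeasurePreserving (fun t ↦ Int.fract (f t)) μ μ) :
    0 ≤ ∫ x, Real.log (diniSup f x) ∂μ := by
  by_contra! hneg
  obtain ⟨c, hc, hc0⟩ := exists_between hneg
  obtain ⟨n, hn, hnpos⟩ :=
    ((hf.eventually_log_diniSup_iterate_lt hirr hμ hc).and (eventually_gt_atTop 0)).exists
  have hnc : 0 ≤ (n : ℝ) * c := by
    refine (hf.iterate n).nonneg_of_log_diniSup_le (f.coe_pow n ▸ (f ^ n).map_add_one) fun x ↦ ?_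
    have := hn x
    rw [one_div, inv_mul_lt_iff₀ (Nat.cast_pos.2 hnpos)] at this
    exact this.le
  exact hnc.not_gt (mul_neg_of_pos_of_neg (Nat.cast_pos.2 hnpos) hc0)

lemma integral_log_diniInf_nonpos (hf : MonoBiLipschitzWith K f)
    (hirr : Irrational f.translationNumber)
    (hμ : MeasurePreserving (fun t ↦ Int.fract (f t)) μ μ) :
    ∫ x, Real.log (diniInf f x) ∂μ ≤ 0 := by
  by_contra! hpos
  obtain ⟨c, hc0, hc⟩ := exists_between hpos
  obtain ⟨n, hn, hnpos⟩ :=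
    ((hf.eventually_lt_log_diniInf_iterate hirr hμ hc).and (eventually_gt_atTop 0)).exists
  have hnc : (n : ℝ) * c ≤ 0 := by
    refine (hf.iterate n).nonpos_of_le_log_diniInf (f.coe_pow n ▸ (f ^ n).map_add_one) fun x ↦ ?_
    have := hn x
    rw [one_div, lt_inv_mul_iff₀ (Nat.cast_pos.2 hnpos)] at this
    exact this.le
  exact hnc.not_gt (mul_pos (Nat.cast_pos.2 hnpos) hc0)

theorem tendstoUniformly_log_dini_iterate (hf : MonoBiLipschitzWith K f)
    (hirr : Irrational f.translationNumber)
    (hμ : MeasurePreserving (fun t ↦ Int.fract (f t)) μ μ)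
    (hreg : ∀ᵐ x ∂μ, diniSup f x = diniInf f x) :
    TendstoUniformly (fun n : ℕ ↦ fun x ↦ 1 / (n : ℝ) * Real.log (diniSup f^[n] x))
      (fun _ ↦ 0) atTop ∧
    TendstoUniformly (fun n : ℕ ↦ fun x ↦ 1 / (n : ℝ) * Real.log (diniInf f^[n] x))
      (fun _ ↦ 0) atTop := by
  have hint : ∫ x, Real.log (diniSup f x) ∂μ = ∫ x, Real.log (diniInf f x) ∂μ :=
    integral_congr_ae (hreg.mono fun _ ↦ congrArg Real.log)
  have hinf := (hf.integral_log_diniSup_nonneg hirr hμ).trans_eq hint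
  have hsup := hint.trans_le (hf.integral_log_diniInf_nonpos hirr hμ)
  refine tendstoUniformly_zero_of_eventually (fun n x ↦ ?_)
    (fun c hc ↦ hf.eventually_log_diniSup_iterate_lt hirr hμ (hsup.trans_lt hc))
    (fun c hc ↦ hf.eventually_lt_log_diniInf_iterate hirr hμ (hc.trans_le hinf))
  exact mul_le_mul_of_nonneg_left ((hf.iterate n).log_diniInf_le_log_diniSup x) (by positivity)

end MonoBiLipschitzWith

end GrowthRate

/-- For a bi-Lipschitz orientation-preserving circle homeomorphism (given by
its lift `H`) with irrational rotation number and unique invariant measure `μ`,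
if `H` is C¹-regular `μ`-a.e. (upper and lower Dini derivatives agree), then
`(1/n) log((Hⁿ)'_±) → 0` uniformly. -/
theorem stmt15 (H : ℝ → ℝ) (L : ℝ) (hL : 1 ≤ L)
    (hmono : StrictMono H) (hlift : ∀ t, H (t + 1) = H t + 1)
    (hlip : ∀ s t, |H s - H t| ≤ L * |s - t|)
    (hlip' : ∀ s t, |s - t| ≤ L * |H s - H t|)
    (ρ : ℝ) (hirr : Irrational ρ)
    (hρ : ∀ t, Tendsto (fun n : ℕ => (H^[n] t - t) / n) atTop (nhds ρ))
    (μ : Measure ℝ) [IsProbabilityMeasure μ] (hsupp : μ (Set.Ico (0 : ℝ) 1) = 1)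
    (hinvμ : ∀ A : Set ℝ, MeasurableSet A →
      μ ((fun t => Int.fract (H t)) ⁻¹' A) = μ A)
    (hreg : ∀ᵐ θ ∂μ, diniSup H θ = diniInf H θ) :
    TendstoUniformly
      (fun n : ℕ => fun θ : ℝ => (1 / (n : ℝ)) * Real.log (diniSup (H^[n]) θ))
      (fun _ => 0) atTop ∧
    TendstoUniformly
      (fun n : ℕ => fun θ : ℝ => (1 / (n : ℝ)) * Real.log (diniInf (H^[n]) θ))
      (fun _ => 0) atTop := by
  let f : CircleDeg1Lift := ⟨⟨H, hmono.monotone⟩, hlift⟩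
  have hf : MonoBiLipschitzWith L.toNNReal f :=
    ⟨hmono.monotone, .of_dist_le' hlip, .of_le_mul_dist fun s t ↦
      (hlip' s t).trans (mul_le_mul_of_nonneg_right L.le_coe_toNNReal (abs_nonneg _))⟩
  have hrot : f.translationNumber = ρ :=
    f.translationNumber_eq_of_tendsto₀ (by simpa only [sub_zero] using! hρ 0)
  have hmeas : Measurable fun t ↦ Int.fract (f t) := measurable_fract.comp f.monotone.measurable
  have hμ : MeasurePreserving (fun t ↦ Int.fract (f t)) μ μ :=
    ⟨hmeas, Measure.ext fun s hs ↦ by rw [Measure.map_apply hmeas hs]; exact hinvμ s hs⟩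
  exact hf.tendstoUniformly_log_dini_iterate (hrot ▸ hirr) hμ hreg
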